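/- Let $d\ge 1$, $k\in\mathbb{N}$, and set $\varepsilon=2^{-2k}$. For $t\in\mathbb{R}$ define $s_t:\mathbb{Z}^d\to\mathbb{C}$ by $s_t(m)=e^{2\pi i|m|^2(t+i\varepsilon)}$ and let $\widehat{s_t}(\alpha)=\sum_{m\in\mathbb{Z}^d}s_t(m)e^{-2\pi i m\cdot\alpha}$. There is a constant $C_d$ such that: if $1\le a\le q\le 2^k$ with $\gcd(a,q)=1$ and $t=a/q+\tau$ with $|\tau|\le 2^{-k}q^{-1}$, then $\sup_{\alpha\in\mathbb{T}^d}|\widehat{s_t}(\alpha)|\le C_d\,q^{-d/2}(\varepsilon+|\tau|)^{-d/2}$. -/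

import Mathlib

open scoped BigOperators Real

noncomputable section

/-- Squared Euclidean norm of a lattice point, as a real number. -/
def nsq {d : ℕ} (m : Fin d → ℤ) : ℝ := ∑ i, ((m i : ℝ)) ^ 2

/-- `s_t(m) = e^{2πi|m|²(t+iε)}`. -/
def sFun {d : ℕ} (ε t : ℝ) (m : Fin d → ℤ) : ℂ :=
  Complex.exp (2 * (π : ℂ) * Complex.I * (nsq m : ℝ) * ((t : ℂ) + Complex.I * (ε : ℝ)))

/-- The Fourier transform `ŝ_t(α) = ∑_m s_t(m) e^{-2πi m·α}`. -/
def sHat {d : ℕ} (ε t : ℝ) (α : Fin d → ℝ) : ℂ :=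
  ∑' m : Fin d → ℤ,
    sFun ε t m * Complex.exp (-(2 * (π : ℂ) * Complex.I) * (∑ i, (m i : ℝ) * α i))


lemma card_two_torsion (q : ℕ) [NeZero q] :
    (Finset.univ.filter (fun h : ZMod q => 2 * h = 0)).card ≤ 2 := by
  have hsub : (Finset.univ.filter (fun h : ZMod q => 2 * h = 0)) ⊆
      {0, ((q / 2 : ℕ) : ZMod q)} := by
    intro h hh
    simp only [Finset.mem_filter, Finset.mem_univ, true_and] at hh
    have h1 : ((2 * h.val : ℕ) : ZMod q) = 0 := by
      push_cast
      rw [ZMod.natCast_zmod_val]; exact hh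
    rw [ZMod.natCast_eq_zero_iff] at h1
    obtain ⟨c, hc⟩ := h1
    have hlt := ZMod.val_lt h
    have hc2 : c < 2 := by
      by_contra hcon
      have : q * 2 ≤ q * c := Nat.mul_le_mul_left _ (by omega)
      omega
    simp only [Finset.mem_insert, Finset.mem_singleton]
    interval_cases c
    · left
      rw [← ZMod.val_eq_zero]; omega
    · right
      have : q / 2 = h.val := by omega
      rw [this, ZMod.natCast_zmod_val]
  exact (Finset.card_le_card hsub).trans Finset.card_le_two

lemma gauss_bound (q : ℕ) [NeZero q] (a b : ZMod q) (ha : IsUnit a) :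
    ‖∑ r : ZMod q, ZMod.stdAddChar (a * r ^ 2 + b * r)‖ ^ 2 ≤ 2 * (q : ℝ) := by
  set S := ∑ r : ZMod q, ZMod.stdAddChar (a * r ^ 2 + b * r) with hS
  have h1 : S * (starRingEnd ℂ) S = ∑ h : ZMod q, ZMod.stdAddChar (a * h ^ 2 + b * h) *
      ∑ s : ZMod q, ZMod.stdAddChar (s * (2 * a * h)) := by
    rw [hS, map_sum, Finset.sum_mul_sum, Finset.sum_comm]
    simp_rw [Finset.mul_sum]
    rw [Finset.sum_comm (s := Finset.univ (α := ZMod q))]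
    conv_rhs => rw [Finset.sum_comm]
    rw [Finset.sum_comm]
    refine Finset.sum_congr rfl fun s _ => ?_
    rw [← Equiv.sum_comp (Equiv.addRight s)]
    refine Finset.sum_congr rfl fun h _ => ?_
    rw [← AddChar.map_neg_eq_conj, ← AddChar.map_add_eq_mul, ← AddChar.map_add_eq_mul]
    congr 1
    simp only [Equiv.coe_addRight]
    ring
  have h2 : ∀ h : ZMod q, ‖∑ s : ZMod q, ZMod.stdAddChar (s * (2 * a * h))‖ =
      if 2 * h = 0 then (q : ℝ) else 0 := by
    intro h
    rw [AddChar.sum_mulShift _ (ZMod.isPrimitive_stdAddChar q)]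
    have : 2 * a * h = 0 ↔ 2 * h = 0 := by
      rw [show 2 * a * h = a * (2 * h) by ring]
      exact ha.mul_right_eq_zero
    simp only [this]
    split_ifs <;> simp [ZMod.card]
  have h3 : ‖S‖ ^ 2 = ‖S * (starRingEnd ℂ) S‖ := by
    rw [norm_mul, RCLike.norm_conj, sq]
  rw [h3, h1]
  calc _ ≤ ∑ h : ZMod q, ‖ZMod.stdAddChar (a * h ^ 2 + b * h) *
      ∑ s : ZMod q, ZMod.stdAddChar (s * (2 * a * h))‖ := norm_sum_le _ _
    _ = ∑ h : ZMod q, if 2 * h = 0 then (q : ℝ) else 0 := by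
        refine Finset.sum_congr rfl fun h _ => ?_
        rw [norm_mul, h2, AddChar.norm_apply, one_mul]
    _ = ((Finset.univ.filter (fun h : ZMod q => 2 * h = 0)).card : ℝ) * q := by
        rw [← Finset.sum_filter, Finset.sum_const, nsmul_eq_mul]
    _ ≤ 2 * q := by
        gcongr
        exact_mod_cast card_two_torsion q

lemma gauss_bound' (q : ℕ) [NeZero q] (a : ℕ) (j : ℤ) (ha : Nat.Coprime a q) :
    ‖∑ r : Fin q, Complex.exp (2 * π * Complex.I * (a * (r : ℕ) ^ 2 + j * (r : ℕ)) / q)‖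
      ≤ √(2 * q) := by
  apply Real.le_sqrt_of_sq_le
  have h := gauss_bound q (a : ZMod q) (j : ZMod q) ((ZMod.isUnit_iff_coprime a q).2 ha)
  convert h using 3
  refine Fintype.sum_equiv (ZMod.finEquiv q).toEquiv _ _ fun r => ?_
  have : (ZMod.finEquiv q).toEquiv r = ((r : ℕ) : ZMod q) := by
    obtain _ | q := q
    · exact absurd rfl (NeZero.ne 0)
    · apply Fin.ext
      simp [ZMod.finEquiv]
      erw [Fin.val_natCast]
      exact (Nat.mod_eq_of_lt r.2).symm
  rw [this]
  have h2 := ZMod.stdAddChar_coe (N := q) (a * (r : ℕ) ^ 2 + j * (r : ℕ))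
  push_cast at h2
  rw [h2]

lemma tsum_pi_prod (d : ℕ) (f : Fin d → ℤ → ℂ) (hf : ∀ i, Summable fun n => ‖f i n‖) :
    (Summable fun m : Fin d → ℤ => ‖∏ i, f i (m i)‖) ∧
    ∑' m : Fin d → ℤ, ∏ i, f i (m i) = ∏ i, ∑' n, f i n := by
  induction d with
  | zero => 
    constructor
    · exact (hasSum_fintype _).summable
    · simp [tsum_fintype]
  | succ d ih =>
    obtain ⟨ih1, ih2⟩ := ih (fun i => f i.succ) (fun i => hf i.succ)
    have e := Fin.consEquiv (fun _ : Fin (d + 1) => ℤ)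
    constructor
    · rw [← (Fin.consEquiv (fun _ : Fin (d + 1) => ℤ)).summable_iff]
      refine ((hf 0).mul_norm ih1).congr fun x => ?_
      simp [Fin.prod_univ_succ, Fin.consEquiv]
    · rw [← (Fin.consEquiv (fun _ : Fin (d + 1) => ℤ)).tsum_eq, Fin.prod_univ_succ, ← ih2,
        tsum_mul_tsum_of_summable_norm (hf 0) ih1]
      refine tsum_congr fun x => ?_
      simp [Fin.prod_univ_succ, Fin.consEquiv]

lemma gauss_tsum_bound : ∃ C : ℝ, 0 < C ∧ ∀ (c β : ℝ), π / 4 ≤ c →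
    (Summable fun j : ℤ => Real.exp (-c * (β + j) ^ 2)) ∧
    ∑' j : ℤ, Real.exp (-c * (β + j) ^ 2) ≤ C := by
  have hs : Summable fun j : ℤ => Real.exp (-(π / 8) * (j : ℝ) ^ 2 + π / 4) := by
    have := summable_pow_mul_jacobiTheta₂_term_bound 0 (T := 1 / 8) (by norm_num) 0
    simp only [Real.exp_add]
    refine Summable.mul_right _ (this.congr fun j => ?_)
    rw [pow_zero, one_mul]; congr 1; ring
  refine ⟨∑' j : ℤ, Real.exp (-(π / 8) * (j : ℝ) ^ 2 + π / 4),
    hs.tsum_pos (fun _ => (Real.exp_pos _).le) 0 (Real.exp_pos _), fun c β hc => ?_⟩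
  have key : ∀ j : ℤ, Real.exp (-c * (β + (j - ⌊β⌋ : ℤ)) ^ 2) ≤
      Real.exp (-(π / 8) * (j : ℝ) ^ 2 + π / 4) := by
    intro j
    apply Real.exp_le_exp.2
    have e : β + ((j - ⌊β⌋ : ℤ) : ℝ) = Int.fract β + j := by
      push_cast; rw [← Int.self_sub_floor]; ring
    rw [e]
    have h0 := Int.fract_nonneg β
    have h1 := (Int.fract_lt_one β).le
    set x := Int.fract β
    have h2 : (j : ℝ) ^ 2 / 2 - 1 ≤ (x + j) ^ 2 := by nlinarith [sq_nonneg (2 * x + j)]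
    have h3 : π / 4 * (x + j) ^ 2 ≤ c * (x + j) ^ 2 := by gcongr
    nlinarith [Real.pi_pos]
  have hs' : Summable fun j : ℤ => Real.exp (-c * (β + (j - ⌊β⌋ : ℤ)) ^ 2) :=
    hs.of_nonneg_of_le (fun _ => (Real.exp_pos _).le) key
  constructor
  · rw [← (Equiv.subRight ⌊β⌋).summable_iff]
    exact hs'
  · rw [← (Equiv.subRight ⌊β⌋).tsum_eq]
    exact hs'.tsum_le_tsum key hs

lemma one_dim_identity (q : ℕ) [NeZero q] (a : ℕ) (w : ℂ) (hw : 0 < w.im) (α : ℝ) :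
    (Summable fun m : ℤ => ‖Complex.exp (2 * π * Complex.I * m ^ 2 * (a / q + w)
      - 2 * π * Complex.I * m * α)‖) ∧
    ∑' m : ℤ, Complex.exp (2 * π * Complex.I * m ^ 2 * (a / q + w) - 2 * π * Complex.I * m * α)
     = 1 / (-Complex.I * (2 * q ^ 2 * w)) ^ (1 / 2 : ℂ) *
      ∑' j : ℤ, (∑ r : Fin q,
        Complex.exp (2 * π * Complex.I * (a * (r : ℕ) ^ 2 + j * (r : ℕ)) / q)) *
        Complex.exp (-π * Complex.I * (α + j / q) ^ 2 / (2 * w)) := by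
  have hq : (q : ℂ) ≠ 0 := by exact_mod_cast NeZero.ne q
  have hqr : (0 : ℝ) < q := by exact_mod_cast Nat.pos_of_ne_zero (NeZero.ne q)
  have hw0 : w ≠ 0 := by rintro rfl; simp at hw
  set F : ℤ → ℂ := fun m => Complex.exp (2 * π * Complex.I * m ^ 2 * (a / q + w)
      - 2 * π * Complex.I * m * α) with hF
  have hsum : Summable fun m => ‖F m‖ := by
    have h := (summable_jacobiTheta₂_term_iff (-α) (2 * (a / q + w))).2 (by
      have : (2 * (a / q + w) : ℂ).im = 2 * w.im := by
        have : ((a : ℂ) / q) = ((a / q : ℝ) : ℂ) := by push_cast; rfl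
        rw [this]
        simp [-Complex.ofReal_div]
      rw [this]; positivity)
    refine h.norm.congr fun m => ?_
    rw [jacobiTheta₂_term, hF]
    congr 2; ring
  refine ⟨hsum, ?_⟩
  have hT : 0 < (2 * q ^ 2 * w : ℂ).im := by
    have : (2 * q ^ 2 * w : ℂ) = ((2 * q ^ 2 : ℝ) : ℂ) * w := by push_cast; rfl
    rw [this, Complex.im_ofReal_mul]; positivity
  have hT' : 0 < (-1 / (2 * q ^ 2 * w) : ℂ).im := by
    rw [neg_div, Complex.neg_im, one_div, Complex.inv_im, neg_div, neg_neg]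
    exact div_pos hT (Complex.normSq_pos.2 (by intro h; rw [h] at hT; simp at hT))
  -- inner sum
  have hinner : ∀ r : Fin q, ∑' l : ℤ, F (l * q + (r : ℕ)) =
      1 / (-Complex.I * (2 * q ^ 2 * w)) ^ (1 / 2 : ℂ) *
      ∑' j : ℤ, Complex.exp (2 * π * Complex.I * (a * (r : ℕ) ^ 2 + j * (r : ℕ)) / q) *
        Complex.exp (-π * Complex.I * (α + j / q) ^ 2 / (2 * w)) := by
    intro r
    have h1 : ∀ l : ℤ, F (l * q + (r : ℕ)) =
        Complex.exp (2 * π * Complex.I * (r : ℕ) ^ 2 * (a / q + w)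
          - 2 * π * Complex.I * (r : ℕ) * α) *
        jacobiTheta₂_term l (2 * (r : ℕ) * q * w - q * α) (2 * q ^ 2 * w) := by
      intro l
      rw [jacobiTheta₂_term, hF, ← Complex.exp_add, Complex.exp_eq_exp_iff_exists_int]
      refine ⟨l * l * q * a + 2 * l * r * a, ?_⟩
      push_cast
      field_simp
      ring
    simp_rw [h1]
    rw [tsum_mul_left]
    change _ * jacobiTheta₂ _ _ = _
    rw [jacobiTheta₂_functional_equation, jacobiTheta₂, ← tsum_mul_left, ← tsum_mul_left,
      ← tsum_mul_left]
    refine tsum_congr fun j => ?_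
    rw [jacobiTheta₂_term]
    rw [mul_assoc (1 / _), mul_left_comm, ← Complex.exp_add, ← Complex.exp_add, ← Complex.exp_add]
    congr 2
    field_simp
    ring
  have hsumj : ∀ r : Fin q, Summable fun j : ℤ =>
      Complex.exp (2 * π * Complex.I * (a * (r : ℕ) ^ 2 + j * (r : ℕ)) / q) *
        Complex.exp (-π * Complex.I * (α + j / q) ^ 2 / (2 * w)) := by
    intro r
    have h := ((summable_jacobiTheta₂_term_iff ((r : ℕ) / q - α / (2 * q * w))
      (-1 / (2 * q ^ 2 * w))).2 hT').mul_left (Complex.exp (2 * π * Complex.I * (a * (r : ℕ) ^ 2) / q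
        - π * Complex.I * α ^ 2 / (2 * w)))
    refine h.congr fun j => ?_
    rw [jacobiTheta₂_term, ← Complex.exp_add, ← Complex.exp_add]
    congr 1
    field_simp
    ring
  have hF' : Summable fun p : Fin q × ℤ => F (p.2 * q + (p.1 : ℕ)) := by
    have := ((Int.divModEquiv q).symm.summable_iff (f := F)).2 hsum.of_norm
    have := ((Equiv.prodComm (Fin q) ℤ).summable_iff).2 this
    refine this.congr fun p => ?_
    simp [Int.divModEquiv]
  calc ∑' m, F m = ∑' p : Fin q × ℤ, F (p.2 * q + (p.1 : ℕ)) := by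
        rw [← (Int.divModEquiv q).symm.tsum_eq F, ← (Equiv.prodComm (Fin q) ℤ).tsum_eq]
        refine tsum_congr fun p => ?_
        simp [Int.divModEquiv]
    _ = ∑ r : Fin q, ∑' l : ℤ, F (l * q + (r : ℕ)) := by
        rw [hF'.tsum_prod, tsum_fintype]
    _ = _ := by
        simp_rw [hinner]
        rw [← Finset.mul_sum, ← Summable.tsum_finsetSum (fun r _ => hsumj r)]
        simp_rw [Finset.sum_mul]

lemma one_dim_bound : ∃ C : ℝ, 0 < C ∧ ∀ (k : ℕ) (a q : ℕ) (τ : ℝ),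
      1 ≤ a → a ≤ q → q ≤ 2 ^ k → Nat.Coprime a q →
      |τ| ≤ (2 : ℝ) ^ (-(k : ℤ)) / q →
      ∀ α : ℝ, ‖∑' m : ℤ, Complex.exp (2 * π * Complex.I * m ^ 2 *
          (a / q + (τ + Complex.I * ((((2 : ℝ) ^ (2 * k))⁻¹ : ℝ) : ℂ)))
          - 2 * π * Complex.I * m * α)‖ ≤
        C * ((q : ℝ) * (((2 : ℝ) ^ (2 * k))⁻¹ + |τ|)) ^ (-(1 / 2) : ℝ) := by
  obtain ⟨C, hC, hCb⟩ := gauss_tsum_bound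
  refine ⟨√2 * C, by positivity, fun k a q τ ha haq hqk hcop hτ α => ?_⟩
  have hq0 : 0 < q := by omega
  haveI : NeZero q := ⟨hq0.ne'⟩
  have hqr : (0 : ℝ) < q := by exact_mod_cast hq0
  set ε : ℝ := ((2 : ℝ) ^ (2 * k))⁻¹ with hε
  have hε0 : 0 < ε := by positivity
  set w : ℂ := τ + Complex.I * (ε : ℂ) with hw
  have hwim : w.im = ε := by simp [hw]
  have hwre : w.re = τ := by simp [hw]
  have hw0 : w ≠ 0 := by intro h; rw [h] at hwim; simp at hwim; linarith
  have hnsq : Complex.normSq w = τ ^ 2 + ε ^ 2 := by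
    rw [Complex.normSq_apply, hwim, hwre]; ring
  have hnsq0 : 0 < Complex.normSq w := Complex.normSq_pos.2 hw0
  rw [(one_dim_identity q a w (by rw [hwim]; exact hε0) α).2]
  set c : ℝ := π / 2 * (ε / (q ^ 2 * Complex.normSq w)) with hc
  -- arithmetic
  have hδ : ((2 : ℝ) ^ (-(k : ℤ))) = (2 ^ k : ℝ)⁻¹ := by simp
  rw [hδ] at hτ
  have hεδ : ε = ((2 ^ k : ℝ)⁻¹) ^ 2 := by rw [hε, inv_pow, ← pow_mul, mul_comm]
  have hqk' : (q : ℝ) ≤ 2 ^ k := by exact_mod_cast hqk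
  set δ : ℝ := (2 ^ k : ℝ)⁻¹ with hδdef
  have hδ0 : 0 < δ := by positivity
  have hqδ : q * δ ≤ 1 := by
    rw [hδdef, ← div_eq_mul_inv]; exact (div_le_one (by positivity)).2 hqk'
  have hqτ : q * |τ| ≤ δ := by rw [le_div_iff₀ hqr] at hτ; linarith
  have hbnd : q ^ 2 * Complex.normSq w ≤ 2 * ε := by
    rw [hnsq]
    have h1 : (q * |τ|) ^ 2 ≤ δ ^ 2 := by gcongr
    have h2 : (q * ε) ^ 2 ≤ δ ^ 2 := by
      have : q * ε ≤ δ := by rw [hεδ]; nlinarith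
      gcongr
    rw [mul_pow, sq_abs] at h1
    rw [hεδ] at h2 ⊢
    nlinarith
  have hc4 : π / 4 ≤ c := by
    have : 1 / 2 ≤ ε / (q ^ 2 * Complex.normSq w) := by
      rw [le_div_iff₀ (by positivity)]; linarith
    rw [hc]; nlinarith [Real.pi_pos]
  obtain ⟨hs, hsb⟩ := hCb c (q * α) hc4
  have hnorm : ∀ j : ℤ, ‖(∑ r : Fin q,
        Complex.exp (2 * π * Complex.I * (a * (r : ℕ) ^ 2 + j * (r : ℕ)) / q)) *
        Complex.exp (-π * Complex.I * (α + j / q) ^ 2 / (2 * w))‖ ≤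
        √(2 * q) * Real.exp (-c * (q * α + j) ^ 2) := by
    intro j
    rw [norm_mul]
    refine mul_le_mul (gauss_bound' q a j hcop) (le_of_eq ?_) (norm_nonneg _) (Real.sqrt_nonneg _)
    rw [Complex.norm_exp]
    congr 1
    have : (-π * Complex.I * (α + j / q) ^ 2 / (2 * w) : ℂ) =
        ((-(π / 2) * (α + j / q) ^ 2 : ℝ) : ℂ) * (Complex.I * w⁻¹) := by
      push_cast; field_simp
    rw [this, Complex.re_ofReal_mul, Complex.I_mul_re, Complex.inv_im, hwim, hc]
    field_simp
    try ring
  have hsn := (hs.mul_left (√(2 * q))).of_norm_bounded hnorm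
  have h1 : ‖∑' j : ℤ, (∑ r : Fin q,
        Complex.exp (2 * π * Complex.I * (a * (r : ℕ) ^ 2 + j * (r : ℕ)) / q)) *
        Complex.exp (-π * Complex.I * (α + j / q) ^ 2 / (2 * w))‖ ≤ √(2 * q) * C := by
    refine (tsum_of_norm_bounded (hs.mul_left (√(2 * q))).hasSum hnorm).trans ?_
    rw [tsum_mul_left]
    gcongr
  have h2 : ‖(1 / (-Complex.I * (2 * q ^ 2 * w)) ^ (1 / 2 : ℂ) : ℂ)‖ =
      (2 * q ^ 2 * ‖w‖) ^ (-(1 / 2) : ℝ) := by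
    have hz : (-Complex.I * (2 * q ^ 2 * w) : ℂ) ≠ 0 := by
      simp [hw0, hq0.ne']
    rw [norm_div, norm_one, show (1 / 2 : ℂ) = ((1 / 2 : ℝ) : ℂ) by push_cast; rfl,
      Complex.norm_cpow_real, Real.rpow_neg (by positivity), one_div]
    simp
  rw [norm_mul, h2]
  have hwn : (ε + |τ|) / 2 ≤ ‖w‖ := by
    have e1 := Complex.abs_re_le_norm w
    have e2 := Complex.abs_im_le_norm w
    rw [hwre] at e1
    rw [hwim, abs_of_pos hε0] at e2
    linarith
  have h3 : (2 * q ^ 2 * ‖w‖) ^ (-(1 / 2) : ℝ) ≤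
      (q * (q * (ε + |τ|))) ^ (-(1 / 2) : ℝ) := by
    apply Real.rpow_le_rpow_of_nonpos
    · positivity
    · nlinarith [sq_nonneg (q : ℝ), pow_pos hqr 2]
    · norm_num
  calc _ ≤ (q * (q * (ε + |τ|))) ^ (-(1 / 2) : ℝ) * (√(2 * q) * C) := by
        gcongr
    _ = _ := by
        rw [Real.mul_rpow (by positivity) (by positivity), Real.sqrt_mul (by norm_num)]
        rw [Real.rpow_neg (by positivity), ← Real.sqrt_eq_rpow]
        have : √(q : ℝ) ≠ 0 := by positivity
        field_simp

/-- **Estimate (CrudeEst)**: on the Farey arc around `a/q`,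
`sup_{α ∈ 𝕋^d} |ŝ_t(α)| ≤ C_d q^{-d/2} (ε+|τ|)^{-d/2}`. -/
theorem crude_estimate (d : ℕ) (hd : 1 ≤ d) :
    ∃ C : ℝ, 0 < C ∧ ∀ (k : ℕ) (a q : ℕ) (τ : ℝ),
      1 ≤ a → a ≤ q → q ≤ 2 ^ k → Nat.Coprime a q →
      |τ| ≤ (2 : ℝ) ^ (-(k : ℤ)) / q →
      ∀ α : Fin d → ℝ,
        ‖sHat (d := d) (((2 : ℝ) ^ (2 * k))⁻¹) ((a : ℝ) / q + τ) α‖ ≤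
          C * (q : ℝ) ^ (-(d : ℝ) / 2) * (((2 : ℝ) ^ (2 * k))⁻¹ + |τ|) ^ (-(d : ℝ) / 2) := by
  obtain ⟨C, hC, hb⟩ := one_dim_bound
  refine ⟨C ^ d, by positivity, fun k a q τ ha haq hqk hcop hτ α => ?_⟩
  have hq0 : 0 < q := by omega
  haveI : NeZero q := ⟨hq0.ne'⟩
  set ε : ℝ := ((2 : ℝ) ^ (2 * k))⁻¹ with hε
  have hε0 : 0 < ε := by positivity
  have hprod : sHat ε ((a : ℝ) / q + τ) α = ∏ i : Fin d, ∑' m : ℤ,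
      Complex.exp (2 * π * Complex.I * m ^ 2 * (a / q + (τ + Complex.I * (ε : ℂ)))
          - 2 * π * Complex.I * m * α i) := by
    rw [← (tsum_pi_prod d (fun i m => Complex.exp (2 * π * Complex.I * m ^ 2 *
      (a / q + (τ + Complex.I * (ε : ℂ))) - 2 * π * Complex.I * m * α i)) (fun i =>
        (one_dim_identity q a _ (by simpa using hε0) (α i)).1)).2, sHat]
    refine tsum_congr fun m => ?_
    rw [sFun, nsq, ← Complex.exp_add, ← Complex.exp_sum]
    congr 1
    push_cast
    rw [Finset.sum_sub_distrib, Finset.mul_sum, Finset.sum_mul, Finset.mul_sum, sub_eq_add_neg,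
      ← Finset.sum_neg_distrib]
    congr 1 <;> refine Finset.sum_congr rfl fun i _ => ?_ <;> ring
  rw [hprod, norm_prod]
  calc _ ≤ ∏ i : Fin d, (C * ((q : ℝ) * (ε + |τ|)) ^ (-(1 / 2) : ℝ)) :=
        Finset.prod_le_prod (fun _ _ => norm_nonneg _)
          (fun i _ => hb k a q τ ha haq hqk hcop hτ (α i))
    _ = _ := by
        rw [Finset.prod_const, Finset.card_univ, Fintype.card_fin, mul_pow, ← Real.rpow_natCast
          (_ ^ (_ : ℝ)), ← Real.rpow_mul (by positivity),
          show (-(1 / 2) : ℝ) * d = -(d : ℝ) / 2 by ring,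
          Real.mul_rpow (by positivity) (by positivity), mul_assoc]
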